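/- Let p, p′ ∈ [0.1689, 0.5] with |p − p′| ≤ 5·10^{−13} (p′ is the node of the uniform grid with step h = 10^{−12} on [0.1689, 0.5] closest to p). Then for all integers n with 1 ≤ n ≤ 500000, |T_n(p) − T_n(p′)| ≤ 4.6·10^{−9}. -/

import Mathlib

/-- The standard normal distribution function Φ. -/
noncomputable def Phi (x : ℝ) : ℝ :=
  (Real.sqrt (2 * Real.pi))⁻¹ * ∫ t in Set.Iio x, Real.exp (-t ^ 2 / 2)

/-- The left-continuous binomial distribution function
`F_{n,p}(x) = Σ_{0 ≤ i < x} C(n,i) p^i q^{n−i}`. -/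
noncomputable def binomCDF (n : ℕ) (p x : ℝ) : ℝ :=
  ∑ i ∈ Finset.range (n + 1),
    if (i : ℝ) < x then (n.choose i : ℝ) * p ^ i * (1 - p) ^ (n - i) else 0

/-- `Δ_n(p) = sup_x |F_{n,p}(x) − Φ((x − np)/√(npq))|`. -/
noncomputable def Delta (n : ℕ) (p : ℝ) : ℝ :=
  ⨆ x : ℝ, |binomCDF n p x - Phi ((x - n * p) / Real.sqrt (n * p * (1 - p)))|

/-- `ρ(p) = (p² + q²)/√(pq)`. -/
noncomputable def rho (p : ℝ) : ℝ :=
  (p ^ 2 + (1 - p) ^ 2) / Real.sqrt (p * (1 - p))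

/-- `T_n(p) = √n · Δ_n(p) / ρ(p)`. -/
noncomputable def T (n : ℕ) (p : ℝ) : ℝ :=
  Real.sqrt n * Delta n p / rho p

/-!
Differentiating in `p`, the error `F_{n,p}(x) − Φ((x − np)/√(npq))` has derivative `n` times the
difference between the normal density with mean `np` and variance `npq` at `x` and the atom at
`⌈x⌉ - 1` of the binomial law with `n - 1` trials, plus a term bounded uniformly in `n` and `x`.
A local limit theorem, obtained by comparing the two Fourier integrals, shows that this difference
is `O(1/n)`: replacing `n - 1` trials by `n` and `⌈x⌉ - 1` by `x` costs only factors of size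
`O(t² + |t|)` at frequency `t`. Hence `Δ_n` is Lipschitz away from `p ∈ {0, 1}`, with a constant
that does not depend on `n`, and the loss in `T_n` is the factor `√n ≤ √500000`. For `n ≤ 200`,
bounding the atom and the density by constants is enough.
-/

open MeasureTheory ProbabilityTheory Set
open scoped Real NNReal

/-! ### Taylor remainders of the exponential -/

theorem hasDerivAt_exp_mul_sub_sum (z : ℂ) (n : ℕ) (s : ℝ) :
    HasDerivAt (fun s : ℝ ↦ Complex.exp (s * z) -
        ∑ k ∈ Finset.range (n + 1), (s * z) ^ k / k.factorial)
      (z * (Complex.exp (s * z) - ∑ k ∈ Finset.range n, (s * z) ^ k / k.factorial)) s := by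
  have hmul : HasDerivAt (fun s : ℝ ↦ (s : ℂ) * z) z s := by
    simpa using (Complex.ofRealCLM.hasDerivAt (x := s)).mul_const z
  have hsum := HasDerivAt.fun_sum (u := Finset.range (n + 1))
    fun k _ ↦ (hmul.pow k).div_const (k.factorial : ℂ)
  refine (hmul.cexp.sub hsum).congr_deriv ?_
  rw [Finset.sum_range_succ', mul_sub, Finset.mul_sum]
  simp only [Nat.factorial_succ, Nat.cast_mul, Nat.add_sub_cancel, Nat.cast_zero, zero_mul,
    zero_div, add_zero, mul_comm z]
  congr 1
  refine Finset.sum_congr rfl fun k _ ↦ ?_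
  have : (k : ℂ) + 1 ≠ 0 := Nat.cast_add_one_ne_zero k
  push_cast
  field_simp

theorem norm_exp_sub_sum_le_of_re_nonpos {z : ℂ} (hz : z.re ≤ 0) (n : ℕ) :
    ‖Complex.exp z - ∑ k ∈ Finset.range n, z ^ k / k.factorial‖ ≤ ‖z‖ ^ n / n.factorial := by
  suffices h : ∀ s ∈ Icc (0 : ℝ) 1,
      ‖Complex.exp (s * z) - ∑ k ∈ Finset.range n, (s * z) ^ k / k.factorial‖ ≤
        s ^ n * (‖z‖ ^ n / n.factorial) by
    simpa using h 1 (by simp)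
  induction n with
  | zero =>
    intro s hs
    simpa [Complex.norm_exp] using mul_nonpos_of_nonneg_of_nonpos hs.1 hz
  | succ n ih =>
    intro s hs
    refine image_norm_le_of_norm_deriv_right_le_deriv_boundary
      (B := fun s ↦ s ^ (n + 1) * (‖z‖ ^ (n + 1) / (n + 1).factorial))
      (B' := fun s ↦ s ^ n * (‖z‖ ^ (n + 1) / n.factorial))
      (by fun_prop) (fun s _ ↦ (hasDerivAt_exp_mul_sub_sum z n s).hasDerivWithinAt)
      (by simp [Finset.sum_range_succ']) (fun s ↦ ?_) (fun s hs ↦ ?_) hs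
    · refine ((hasDerivAt_pow (n + 1) s).mul_const _).congr_deriv ?_
      rw [Nat.factorial_succ]
      push_cast
      field_simp
    · calc _ ≤ ‖z‖ * (s ^ n * (‖z‖ ^ n / n.factorial)) := by
            rw [norm_mul]
            gcongr
            exact ih s ⟨hs.1, hs.2.le⟩
        _ = _ := by ring

theorem norm_exp_I_mul_sub_quadratic_le (y : ℝ) :
    ‖Complex.exp (Complex.I * y) - (1 + Complex.I * y - y ^ 2 / 2)‖ ≤ |y| ^ 3 / 6 := by
  simpa [Finset.sum_range_succ, Nat.factorial, mul_pow, neg_div, ← sub_eq_add_neg] using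
    norm_exp_sub_sum_le_of_re_nonpos (z := Complex.I * y) (by simp) 3

theorem abs_exp_neg_sub_one_sub_le {y : ℝ} (hy : 0 ≤ y) :
    |Real.exp (-y) - (1 - y)| ≤ y ^ 2 / 2 := by
  have h := norm_exp_sub_sum_le_of_re_nonpos (z := (-y : ℝ)) (by simpa) 2
  norm_cast at h
  simpa [Finset.sum_range_succ, ← sub_eq_add_neg] using h

/-! ### Gaussian integrals -/

theorem integral_abs_pow_odd_mul_exp_neg_mul_sq (j : ℕ) {a : ℝ} (ha : 0 < a) :
    ∫ t : ℝ, |t| ^ (2 * j + 1) * Real.exp (-a * t ^ 2) = j.factorial / (a ^ (j + 1)) := by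
  have habs := integral_comp_abs (f := fun t : ℝ ↦ t ^ (2 * j + 1) * Real.exp (-a * t ^ 2))
  have hhalf := integral_rpow_mul_exp_neg_mul_rpow (p := 2) (q := ((2 * j + 1 : ℕ) : ℝ)) (b := a)
    (by norm_num) (neg_one_lt_zero.trans_le (Nat.cast_nonneg _)) ha
  have hexp : (((2 * j + 1 : ℕ) : ℝ) + 1) / 2 = ((j + 1 : ℕ) : ℝ) := by push_cast; ring
  simp only [neg_div, hexp, Real.rpow_neg ha.le, Real.rpow_natCast, Real.rpow_two] at hhalf
  simp only [sq_abs] at habs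
  rw [habs, hhalf]
  push_cast
  rw [Real.Gamma_nat_eq_factorial]
  field_simp

theorem integrable_abs_pow_mul_exp_neg_mul_sq (j : ℕ) {a : ℝ} (ha : 0 < a) :
    Integrable fun t : ℝ ↦ |t| ^ j * Real.exp (-a * t ^ 2) := by
  have h := (integrable_rpow_mul_exp_neg_mul_sq ha (s := j)
    (neg_one_lt_zero.trans_le (Nat.cast_nonneg _))).norm
  simpa [Real.rpow_natCast] using h

theorem integral_exp_neg_mul_sq_mul_exp_I_mul (μ x : ℝ) {v : ℝ≥0} (hv : v ≠ 0) :
    ∫ t : ℝ, (Real.exp (-(v * t ^ 2 / 2)) : ℂ) * Complex.exp (Complex.I * ((μ - x) * t : ℝ)) =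
      ((2 * π * gaussianPDFReal μ v x : ℝ) : ℂ) := by
  have hv' : (0 : ℝ) < v := by positivity
  have h := fourierIntegral_gaussian (b := ((v / 2 : ℝ) : ℂ)) (by simpa using hv') (μ - x : ℝ)
  have hsqrt : ((π : ℂ) / ((v / 2 : ℝ) : ℂ)) ^ (1 / 2 : ℂ) = ((2 * π / √(2 * π * v) : ℝ) : ℂ) := by
    rw [← Complex.ofReal_div, show (1 / 2 : ℂ) = ((1 / 2 : ℝ) : ℂ) by norm_num,
      ← Complex.ofReal_cpow (by positivity), ← Real.sqrt_eq_rpow]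
    congr 1
    rw [Real.sqrt_eq_iff_eq_sq (by positivity) (by positivity), div_pow,
      Real.sq_sqrt (by positivity)]
    field_simp
  rw [hsqrt] at h
  rw [gaussianPDFReal, ← mul_assoc, ← div_eq_mul_inv, Complex.ofReal_mul, Complex.ofReal_exp]
  convert h using 2 with
  · ext t
    rw [mul_comm, Complex.ofReal_exp]
    congr 2 <;> push_cast <;> ring
  · push_cast
    field_simp
    congr 1
    field_simp
    ring

theorem integrable_exp_neg_mul_sq_mul_exp_I_mul {v : ℝ} (hv : 0 < v) (y : ℝ) :
    Integrable fun t : ℝ ↦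
      (Real.exp (-(v * t ^ 2 / 2)) : ℂ) * Complex.exp (Complex.I * (y * t : ℝ)) := by
  refine (integrable_exp_neg_mul_sq (b := v / 2) (by positivity)).mono'
    (Continuous.aestronglyMeasurable (by fun_prop)) (.of_forall fun t ↦ le_of_eq ?_)
  rw [norm_mul, Complex.norm_real, Real.norm_of_nonneg (Real.exp_pos _).le,
    Complex.norm_exp_I_mul_ofReal, mul_one]
  ring_nf

/-! ### The centred Bernoulli characteristic function -/

/-- The characteristic function at `t` of `B - p`, where `B` is a Bernoulli variable with success
probability `p`. -/
noncomputable def bernoulliChar (p t : ℝ) : ℂ :=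
  (1 - p) * Complex.exp (Complex.I * (-(p * t) : ℝ)) +
    p * Complex.exp (Complex.I * ((1 - p) * t : ℝ))

theorem continuous_bernoulliChar (p : ℝ) : Continuous (bernoulliChar p) := by
  unfold bernoulliChar
  fun_prop

theorem bernoulliChar_eq_exp_mul (p t : ℝ) :
    bernoulliChar p t = Complex.exp (Complex.I * (-(p * t) : ℝ)) *
      (p * Complex.exp (Complex.I * t) + (1 - p)) := by
  have h : Complex.exp (Complex.I * ((1 - p) * t : ℝ)) =
      Complex.exp (Complex.I * (-(p * t) : ℝ)) * Complex.exp (Complex.I * t) := by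
    rw [← Complex.exp_add]
    congr 1
    push_cast
    ring
  rw [bernoulliChar, h]
  ring

theorem norm_bernoulliChar_sq (p t : ℝ) :
    ‖bernoulliChar p t‖ ^ 2 = 1 - 2 * (p * (1 - p)) * (1 - Real.cos t) := by
  have h : (p : ℂ) * Complex.exp (Complex.I * t) + (1 - p) =
      (1 - p + p * Real.cos t : ℝ) + (p * Real.sin t : ℝ) * Complex.I := by
    rw [mul_comm Complex.I, Complex.exp_mul_I]
    push_cast
    ring
  rw [bernoulliChar_eq_exp_mul, h, norm_mul, Complex.norm_exp_I_mul_ofReal, one_mul,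
    ← Complex.normSq_eq_norm_sq, Complex.normSq_add_mul_I]
  linear_combination p ^ 2 * Real.sin_sq_add_cos_sq t

section UnitInterval

variable {p t : ℝ}

theorem norm_bernoulliChar_le (hp : p ∈ Icc 0 1) (ht : |t| ≤ π) :
    ‖bernoulliChar p t‖ ≤ Real.exp (-(2 * (p * (1 - p)) / π ^ 2 * t ^ 2)) := by
  have hu : 0 ≤ p * (1 - p) := mul_nonneg hp.1 (sub_nonneg.2 hp.2)
  refine le_of_sq_le_sq ?_ (Real.exp_pos _).le
  calc ‖bernoulliChar p t‖ ^ 2 = 1 - 2 * (p * (1 - p)) * (1 - Real.cos t) :=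
        norm_bernoulliChar_sq p t
    _ ≤ 1 - 2 * (p * (1 - p)) * (2 / π ^ 2 * t ^ 2) := by
        gcongr
        linarith [Real.cos_le_one_sub_mul_cos_sq ht]
    _ = -(4 * (p * (1 - p)) / π ^ 2 * t ^ 2) + 1 := by ring
    _ ≤ Real.exp (-(4 * (p * (1 - p)) / π ^ 2 * t ^ 2)) := Real.add_one_le_exp _
    _ = Real.exp (-(2 * (p * (1 - p)) / π ^ 2 * t ^ 2)) ^ 2 := by
        rw [← Real.exp_nat_mul]
        congr 1
        push_cast
        ring

theorem norm_bernoulliChar_sub_exp_le (hp : p ∈ Icc 0 1) (ht : |t| ≤ π) :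
    ‖bernoulliChar p t - Real.exp (-(p * (1 - p) * t ^ 2 / 2))‖ ≤
      p * (1 - p) / 5 * |t| ^ 3 := by
  obtain ⟨hp0, hp1⟩ := hp
  have hq0 : 0 ≤ 1 - p := sub_nonneg.2 hp1
  have hu : 0 ≤ p * (1 - p) := mul_nonneg hp0 hq0
  set w := p * (1 - p) * t ^ 2 / 2 with hw
  have hfail := norm_exp_I_mul_sub_quadratic_le (-(p * t))
  have hsucc := norm_exp_I_mul_sub_quadratic_le ((1 - p) * t)
  rw [abs_neg, abs_mul, abs_of_nonneg hp0] at hfail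
  rw [abs_mul, abs_of_nonneg hq0] at hsucc
  have hgauss := abs_exp_neg_sub_one_sub_le (y := w) (by positivity)
  rw [← Real.norm_eq_abs, ← Complex.norm_real] at hgauss
  have hsplit : bernoulliChar p t - Real.exp (-w) =
      (1 - p : ℝ) * (Complex.exp (Complex.I * (-(p * t) : ℝ)) -
          (1 + Complex.I * (-(p * t) : ℝ) - (-(p * t) : ℝ) ^ 2 / 2)) +
        (p : ℝ) * (Complex.exp (Complex.I * ((1 - p) * t : ℝ)) -
          (1 + Complex.I * ((1 - p) * t : ℝ) - ((1 - p) * t : ℝ) ^ 2 / 2)) -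
        (Real.exp (-w) - (1 - w) : ℝ) := by
    rw [bernoulliChar, hw]
    push_cast
    ring
  calc _ ≤ (1 - p) * ((p * |t|) ^ 3 / 6) + p * (((1 - p) * |t|) ^ 3 / 6) +
        w ^ 2 / 2 := by
        rw [hsplit]
        refine norm_sub_le_of_le (norm_add_le_of_le ?_ ?_) hgauss <;>
          rw [norm_mul, Complex.norm_real, Real.norm_of_nonneg (by assumption)] <;> gcongr
    _ = p * (1 - p) * ((1 - 2 * (p * (1 - p))) / 6 + p * (1 - p) * |t| / 8) * |t| ^ 3 := by
        rw [hw, ← sq_abs t]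
        ring
    _ ≤ p * (1 - p) * (1 / 5) * |t| ^ 3 := by
        gcongr
        nlinarith [Real.pi_lt_d2, sq_nonneg (2 * p - 1), mul_le_mul_of_nonneg_left ht hu]
    _ = p * (1 - p) / 5 * |t| ^ 3 := by ring

end UnitInterval

/-! ### The binomial distribution function -/

theorem binomCDF_eq_sum_bernsteinPolynomial (n : ℕ) (p x : ℝ) :
    binomCDF n p x = ∑ i ∈ Finset.range (n + 1),
      if (i : ℝ) < x then (bernsteinPolynomial ℝ n i).eval p else 0 := by
  simp [binomCDF, bernsteinPolynomial]

theorem binomCDF_sub_binomCDF_sub_one (n : ℕ) (p x : ℝ) :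
    binomCDF n p x - binomCDF n p (x - 1) = ∑ i ∈ Finset.range (n + 1),
      if (i : ℤ) = ⌈x⌉ - 1 then (bernsteinPolynomial ℝ n i).eval p else 0 := by
  rw [binomCDF_eq_sum_bernsteinPolynomial, binomCDF_eq_sum_bernsteinPolynomial,
    ← Finset.sum_sub_distrib]
  refine Finset.sum_congr rfl fun i _ ↦ ?_
  have hx : (i : ℝ) < x ↔ (i : ℤ) < ⌈x⌉ := by rw [Int.lt_ceil, Int.cast_natCast]
  have hx1 : (i : ℝ) < x - 1 ↔ (i : ℤ) < ⌈x⌉ - 1 := by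
    rw [← Int.ceil_sub_one, Int.lt_ceil, Int.cast_natCast]
  simp only [hx, hx1]
  split_ifs <;> first | omega | simp

section UnitInterval

variable {n : ℕ} {p : ℝ}

theorem bernsteinPolynomial_eval_nonneg (hp : p ∈ Icc 0 1) (i : ℕ) :
    0 ≤ (bernsteinPolynomial ℝ n i).eval p := by
  have h0 := hp.1
  have h1 : 0 ≤ 1 - p := sub_nonneg.2 hp.2
  simp only [bernsteinPolynomial, Polynomial.eval_mul, Polynomial.eval_pow, Polynomial.eval_sub,
    Polynomial.eval_natCast, Polynomial.eval_X, Polynomial.eval_one]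
  positivity

theorem binomCDF_nonneg (hp : p ∈ Icc 0 1) (x : ℝ) : 0 ≤ binomCDF n p x := by
  rw [binomCDF_eq_sum_bernsteinPolynomial]
  refine Finset.sum_nonneg fun i _ ↦ ?_
  split_ifs
  exacts [bernsteinPolynomial_eval_nonneg hp i, le_rfl]

theorem binomCDF_le_one (hp : p ∈ Icc 0 1) (x : ℝ) : binomCDF n p x ≤ 1 := by
  calc binomCDF n p x ≤ ∑ i ∈ Finset.range (n + 1), (bernsteinPolynomial ℝ n i).eval p := by
        rw [binomCDF_eq_sum_bernsteinPolynomial]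
        refine Finset.sum_le_sum fun i _ ↦ ?_
        split_ifs
        exacts [le_rfl, bernsteinPolynomial_eval_nonneg hp i]
    _ = 1 := by rw [← Polynomial.eval_finsetSum, bernsteinPolynomial.sum, Polynomial.eval_one]

theorem abs_binomCDF_sub_binomCDF_le_one (hp : p ∈ Icc 0 1) (x y : ℝ) :
    |binomCDF n p x - binomCDF n p y| ≤ 1 :=
  abs_sub_le_of_nonneg_of_le (binomCDF_nonneg hp x) (binomCDF_le_one hp x)
    (binomCDF_nonneg hp y) (binomCDF_le_one hp y)

end UnitInterval

theorem hasDerivAt_binomCDF (m : ℕ) (p x : ℝ) :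
    HasDerivAt (fun p ↦ binomCDF (m + 1) p x)
      (-((m + 1) * (binomCDF m p x - binomCDF m p (x - 1)))) p := by
  simp_rw [binomCDF_eq_sum_bernsteinPolynomial]
  have hderiv : ∀ i ∈ Finset.range (m + 1 + 1), HasDerivAt
      (fun p ↦ if (i : ℝ) < x then (bernsteinPolynomial ℝ (m + 1) i).eval p else 0)
      (if (i : ℝ) < x then (bernsteinPolynomial ℝ (m + 1) i).derivative.eval p else 0) p := by
    intro i _
    split_ifs
    exacts [Polynomial.hasDerivAt _ p, hasDerivAt_const p 0]
  have htop : ∑ i ∈ Finset.range (m + 1), (if (i : ℝ) < x then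
        (bernsteinPolynomial ℝ m i).eval p else 0) =
      ∑ i ∈ Finset.range (m + 1 + 1), if (i : ℝ) < x then
        (bernsteinPolynomial ℝ m i).eval p else 0 := by
    simp [Finset.sum_range_succ _ (m + 1), bernsteinPolynomial.eq_zero_of_lt ℝ m.lt_succ_self]
  refine (HasDerivAt.fun_sum hderiv).congr_deriv ?_
  rw [htop, Finset.sum_range_succ' _ (m + 1), Finset.sum_range_succ' _ (m + 1),
    add_sub_right_comm, ← Finset.sum_sub_distrib, mul_add, Finset.mul_sum, neg_add,
    ← Finset.sum_neg_distrib]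
  congr 1
  · refine Finset.sum_congr rfl fun i _ ↦ ?_
    simp only [Nat.cast_add_one, lt_sub_iff_add_lt, bernsteinPolynomial.derivative_succ]
    split_ifs
    · simp
      ring
    · simp
  · simp only [bernsteinPolynomial.derivative_zero]
    split_ifs
    · simp
      ring
    · simp

/-! ### Fourier inversion on the lattice -/

theorem intervalIntegral_exp_int_mul (j : ℤ) :
    ∫ t : ℝ in -π..π, Complex.exp (Complex.I * j * t) = if j = 0 then ((2 * π : ℝ) : ℂ) else 0 := by
  split_ifs with hj
  · subst hj
    simp
    ring
  · have hc : Complex.I * (j : ℂ) ≠ 0 := mul_ne_zero Complex.I_ne_zero (by exact_mod_cast hj)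
    have hperiod : Complex.exp (Complex.I * j * π) = Complex.exp (Complex.I * j * (-π : ℝ)) := by
      rw [Complex.exp_eq_exp_iff_exists_int]
      exact ⟨j, by push_cast; ring⟩
    rw [integral_exp_mul_complex hc, hperiod, sub_self, zero_div]

theorem bernoulliChar_pow_mul_exp (m : ℕ) (p t : ℝ) (k : ℤ) :
    bernoulliChar p t ^ m * Complex.exp (Complex.I * ((m * p - k) * t : ℝ)) =
      ∑ i ∈ Finset.range (m + 1), (((bernsteinPolynomial ℝ m i).eval p : ℝ) : ℂ) *
        Complex.exp (Complex.I * (i - k : ℤ) * t) := by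
  rw [bernoulliChar_eq_exp_mul, mul_pow, add_pow, mul_right_comm, ← Complex.exp_nat_mul,
    ← Complex.exp_add, Finset.mul_sum]
  refine Finset.sum_congr rfl fun i _ ↦ ?_
  have hexp : Complex.exp (Complex.I * (i - k : ℤ) * t) =
      Complex.exp (m * (Complex.I * (-(p * t) : ℝ)) + Complex.I * ((m * p - k) * t : ℝ)) *
        Complex.exp (i * (Complex.I * t)) := by
    rw [← Complex.exp_add]
    congr 1
    push_cast
    ring
  rw [hexp, mul_pow, ← Complex.exp_nat_mul]
  simp only [bernsteinPolynomial, Polynomial.eval_mul, Polynomial.eval_pow, Polynomial.eval_sub,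
    Polynomial.eval_natCast, Polynomial.eval_X, Polynomial.eval_one]
  push_cast
  ring

theorem intervalIntegral_bernoulliChar_pow_mul_exp (m : ℕ) (p x : ℝ) :
    ∫ t : ℝ in -π..π,
        bernoulliChar p t ^ m * Complex.exp (Complex.I * ((m * p - (⌈x⌉ - 1 : ℤ)) * t : ℝ)) =
      ((2 * π * (binomCDF m p x - binomCDF m p (x - 1)) : ℝ) : ℂ) := by
  simp_rw [bernoulliChar_pow_mul_exp]
  rw [intervalIntegral.integral_finsetSum fun i _ ↦ Continuous.intervalIntegrable (by fun_prop) _ _,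
    binomCDF_sub_binomCDF_sub_one, Finset.mul_sum, Complex.ofReal_sum]
  refine Finset.sum_congr rfl fun i _ ↦ ?_
  simp_rw [intervalIntegral.integral_const_mul, intervalIntegral_exp_int_mul, sub_eq_zero]
  split_ifs
  · push_cast
    ring
  · simp

/-! ### A local limit theorem -/

theorem norm_pow_succ_sub_pow_succ_le {R : Type*} [NormedCommRing R] [NormOneClass R] {z w : R}
    {M : ℝ} (hz : ‖z‖ ≤ M) (hw : ‖w‖ ≤ M) (r : ℕ) :
    ‖z ^ (r + 1) - w ^ (r + 1)‖ ≤ (r + 1) * M ^ r * ‖z - w‖ := by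
  have hM : 0 ≤ M := (norm_nonneg z).trans hz
  have hterm : ∀ i ∈ Finset.range (r + 1), ‖z ^ i * w ^ (r + 1 - 1 - i)‖ ≤ M ^ r := by
    intro i hi
    calc ‖z ^ i * w ^ (r + 1 - 1 - i)‖ ≤ ‖z‖ ^ i * ‖w‖ ^ (r + 1 - 1 - i) :=
          (norm_mul_le _ _).trans (by gcongr <;> exact norm_pow_le _ _)
      _ ≤ M ^ i * M ^ (r + 1 - 1 - i) := by gcongr
      _ = M ^ r := by
          rw [← pow_add]
          congr 1
          have := Finset.mem_range.1 hi
          omega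
  rw [← Commute.geom_sum₂_mul (Commute.all z w)]
  refine (norm_mul_le _ _).trans ?_
  gcongr
  simpa using norm_sum_le_of_le _ hterm

/-- An integrable bound, valid at all frequencies `t`, for the difference between the Fourier
integrands of the binomial law with `r + 1` trials and of the normal law with the mean and variance
of `r + 2` trials. Its first term compares powers of the characteristic functions; its second term
absorbs the one extra normal factor, the shift from a lattice point to a nearby real point, and the
normal tail `π < |t|`. -/
noncomputable def fourierMajorant (p : ℝ) (r : ℕ) (t : ℝ) : ℝ :=
  (r + 1) * (p * (1 - p) / 5) *
      (|t| ^ 3 * Real.exp (-(r * (2 * (p * (1 - p)) / π ^ 2)) * t ^ 2)) +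
    3 / 2 * (|t| * Real.exp (-((r + 1) * (p * (1 - p)) / 2) * t ^ 2))

section UnitInterval

variable {p : ℝ}

theorem norm_bernoulliChar_pow_sub_exp_pow_le (hp : p ∈ Icc 0 1) {t : ℝ} (ht : |t| ≤ π) (r : ℕ) :
    ‖bernoulliChar p t ^ (r + 1) - (Real.exp (-(p * (1 - p) * t ^ 2 / 2)) : ℂ) ^ (r + 1)‖ ≤
      (r + 1) * (p * (1 - p) / 5) *
        (|t| ^ 3 * Real.exp (-(r * (2 * (p * (1 - p)) / π ^ 2)) * t ^ 2)) := by
  have hu : 0 ≤ p * (1 - p) := mul_nonneg hp.1 (sub_nonneg.2 hp.2)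
  have hgauss : ‖(Real.exp (-(p * (1 - p) * t ^ 2 / 2)) : ℂ)‖ ≤
      Real.exp (-(2 * (p * (1 - p)) / π ^ 2 * t ^ 2)) := by
    rw [Complex.norm_real, Real.norm_of_nonneg (Real.exp_pos _).le]
    have hpi : 2 / π ^ 2 ≤ 1 / 2 := by
      rw [div_le_div_iff₀ (by positivity) two_pos]
      nlinarith [Real.two_le_pi]
    gcongr
    calc 2 * (p * (1 - p)) / π ^ 2 * t ^ 2 = p * (1 - p) * t ^ 2 * (2 / π ^ 2) := by ring
      _ ≤ p * (1 - p) * t ^ 2 * (1 / 2) := by gcongr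
      _ = p * (1 - p) * t ^ 2 / 2 := by ring
  calc _ ≤ (r + 1) * Real.exp (-(2 * (p * (1 - p)) / π ^ 2 * t ^ 2)) ^ r *
        ‖bernoulliChar p t - Real.exp (-(p * (1 - p) * t ^ 2 / 2))‖ :=
        norm_pow_succ_sub_pow_succ_le (norm_bernoulliChar_le hp ht) hgauss r
    _ ≤ (r + 1) * Real.exp (-(2 * (p * (1 - p)) / π ^ 2 * t ^ 2)) ^ r *
        (p * (1 - p) / 5 * |t| ^ 3) := by
        gcongr
        exact norm_bernoulliChar_sub_exp_le hp ht
    _ = _ := by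
        rw [← Real.exp_nat_mul]
        ring_nf

theorem norm_indicator_one_sub_exp_mul_exp_I_le (hp : p ∈ Icc 0 1) {y : ℝ} (hy : |y| ≤ 1) (t : ℝ) :
    ‖(Ioc (-π) π).indicator 1 t - (Real.exp (-(p * (1 - p) * t ^ 2 / 2)) : ℂ) *
      Complex.exp (Complex.I * (y * t : ℝ))‖ ≤ 3 / 2 * |t| := by
  have hu : 0 ≤ p * (1 - p) := mul_nonneg hp.1 (sub_nonneg.2 hp.2)
  set g := Real.exp (-(p * (1 - p) * t ^ 2 / 2))
  set E := Complex.exp (Complex.I * (y * t : ℝ)) with hE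
  have hg1 : g ≤ 1 := Real.exp_le_one_iff.2 (neg_nonpos.2 (by positivity))
  have hgn : ‖(g : ℂ)‖ = g := by rw [Complex.norm_real, Real.norm_of_nonneg (Real.exp_pos _).le]
  by_cases ht : t ∈ Ioc (-π) π
  · have hgt : 1 - g ≤ |t| / 2 := by
      have hu4 : p * (1 - p) ≤ 1 / 4 := by nlinarith [sq_nonneg (2 * p - 1)]
      calc 1 - g ≤ p * (1 - p) * t ^ 2 / 2 := by
            linarith [Real.add_one_le_exp (-(p * (1 - p) * t ^ 2 / 2))]
        _ ≤ 1 / 4 * (|t| * 4) / 2 := by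
            rw [← sq_abs, sq]
            gcongr
            exact (abs_le.2 ⟨ht.1.le, ht.2⟩).trans Real.pi_le_four
        _ = |t| / 2 := by ring
    have hEt : ‖E - 1‖ ≤ |t| := by
      refine Real.norm_exp_I_mul_ofReal_sub_one_le.trans ?_
      rw [norm_mul]
      exact mul_le_of_le_one_left (abs_nonneg t) hy
    calc _ = ‖((1 - g : ℝ) : ℂ) - g * (E - 1)‖ := by
          rw [indicator_of_mem ht, Pi.one_apply]
          push_cast
          ring_nf
      _ ≤ (1 - g) + g * ‖E - 1‖ := by
          refine (norm_sub_le _ _).trans_eq ?_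
          rw [norm_mul, hgn, Complex.norm_real, Real.norm_of_nonneg (sub_nonneg.2 hg1)]
      _ ≤ |t| / 2 + 1 * |t| := by gcongr
      _ = 3 / 2 * |t| := by ring
  · have ht1 : 1 ≤ |t| := by
      by_contra! h
      have := abs_lt.1 h
      exact ht ⟨by linarith [Real.two_le_pi], by linarith [Real.two_le_pi]⟩
    rw [indicator_of_notMem ht, zero_sub, norm_neg, norm_mul, hgn, hE,
      Complex.norm_exp_I_mul_ofReal]
    linarith

theorem norm_fourier_integrand_sub_le (hp : p ∈ Icc 0 1) {a b : ℝ} (hab : |b - a| ≤ 1) (r : ℕ)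
    (t : ℝ) :
    ‖(Ioc (-π) π).indicator
          (fun t : ℝ ↦ bernoulliChar p t ^ (r + 1) * Complex.exp (Complex.I * (a * t : ℝ))) t -
        (Real.exp (-((r + 2) * (p * (1 - p)) * t ^ 2 / 2)) : ℂ) *
          Complex.exp (Complex.I * (b * t : ℝ))‖ ≤ fourierMajorant p r t := by
  set g := Real.exp (-(p * (1 - p) * t ^ 2 / 2))
  set E := Complex.exp (Complex.I * ((b - a) * t : ℝ))
  have hgauss : Real.exp (-((r + 2) * (p * (1 - p)) * t ^ 2 / 2)) = g ^ (r + 1) * g := by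
    rw [← pow_succ, ← Real.exp_nat_mul]
    congr 1
    push_cast
    ring
  have hpow : ‖(g : ℂ) ^ (r + 1)‖ = Real.exp (-((r + 1) * (p * (1 - p)) / 2) * t ^ 2) := by
    rw [norm_pow, Complex.norm_real, Real.norm_of_nonneg (Real.exp_pos _).le, ← Real.exp_nat_mul]
    congr 1
    push_cast
    ring
  have hshift : Complex.exp (Complex.I * (b * t : ℝ)) =
      Complex.exp (Complex.I * (a * t : ℝ)) * E := by
    rw [← Complex.exp_add]
    congr 1
    push_cast
    ring
  calc _ = ‖Complex.exp (Complex.I * (a * t : ℝ)) * ((Ioc (-π) π).indicator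
          (fun t : ℝ ↦ bernoulliChar p t ^ (r + 1) - (g : ℂ) ^ (r + 1)) t +
        (g : ℂ) ^ (r + 1) * ((Ioc (-π) π).indicator 1 t - g * E))‖ := by
        rw [hgauss, hshift]
        congr 1
        by_cases ht : t ∈ Ioc (-π) π <;> simp [ht] <;> ring
    _ ≤ ‖(Ioc (-π) π).indicator (fun t : ℝ ↦ bernoulliChar p t ^ (r + 1) - (g : ℂ) ^ (r + 1)) t‖ +
        Real.exp (-((r + 1) * (p * (1 - p)) / 2) * t ^ 2) * (3 / 2 * |t|) := by
        rw [norm_mul, Complex.norm_exp_I_mul_ofReal, one_mul]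
        refine norm_add_le_of_le le_rfl ?_
        rw [norm_mul, hpow]
        gcongr
        exact norm_indicator_one_sub_exp_mul_exp_I_le hp hab t
    _ ≤ fourierMajorant p r t := by
        rw [fourierMajorant, mul_comm (Real.exp (-((r + 1) * _ / 2) * _)), mul_assoc (3 / 2)]
        gcongr
        by_cases ht : t ∈ Ioc (-π) π
        · rw [indicator_of_mem ht]
          exact norm_bernoulliChar_pow_sub_exp_pow_le hp (abs_le.2 ⟨ht.1.le, ht.2⟩) r
        · have hu : 0 ≤ p * (1 - p) := mul_nonneg hp.1 (sub_nonneg.2 hp.2)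
          rw [indicator_of_notMem ht, norm_zero]
          positivity

end UnitInterval

/-- The density at `x` of the normal law with the mean `n * p` and the variance `n * p * (1 - p)` of
the binomial law. The variance is truncated to `ℝ≥0`, as `gaussianPDFReal` requires. -/
noncomputable def matchedNormalPDF (n : ℕ) (p x : ℝ) : ℝ :=
  gaussianPDFReal (n * p) (n * p * (1 - p)).toNNReal x

theorem matchedNormalPDF_nonneg (n : ℕ) (p x : ℝ) : 0 ≤ matchedNormalPDF n p x :=
  gaussianPDFReal_nonneg _ _ x

section LocalLimit

variable {p : ℝ} {r : ℕ}

theorem integrable_fourierMajorant (hp : p ∈ Ioo 0 1) (hr : 0 < r) :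
    Integrable (fourierMajorant p r) := by
  have hu : 0 < p * (1 - p) := mul_pos hp.1 (sub_pos.2 hp.2)
  have hlinear := integrable_abs_pow_mul_exp_neg_mul_sq 1
    (a := (r + 1) * (p * (1 - p)) / 2) (by positivity)
  simp only [pow_one] at hlinear
  exact ((integrable_abs_pow_mul_exp_neg_mul_sq 3 (by positivity)).const_mul _).add
    (hlinear.const_mul _)

theorem integral_fourierMajorant (hp : p ∈ Ioo 0 1) (hr : 0 < r) :
    ∫ t, fourierMajorant p r t =
      ((r + 1) * π ^ 4 / (20 * r ^ 2) + 3 / (r + 1)) / (p * (1 - p)) := by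
  have hu : 0 < p * (1 - p) := mul_pos hp.1 (sub_pos.2 hp.2)
  have ha : 0 < r * (2 * (p * (1 - p)) / π ^ 2) := by positivity
  have hb : 0 < (r + 1) * (p * (1 - p)) / 2 := by positivity
  have hcubic := integral_abs_pow_odd_mul_exp_neg_mul_sq 1 ha
  have hlinear := integral_abs_pow_odd_mul_exp_neg_mul_sq 0 hb
  have hcubic_int := integrable_abs_pow_mul_exp_neg_mul_sq 3 ha
  have hlinear_int := integrable_abs_pow_mul_exp_neg_mul_sq 1 hb
  simp only [mul_zero, zero_add, pow_one, mul_one, Nat.factorial,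
    Nat.cast_one] at hcubic hlinear hlinear_int
  norm_num only at hcubic
  unfold fourierMajorant
  rw [integral_add (hcubic_int.const_mul _) (hlinear_int.const_mul _), integral_const_mul,
    integral_const_mul, hcubic, hlinear]
  field_simp
  ring

theorem abs_binomCDF_sub_sub_matchedNormalPDF_le (hp : p ∈ Ioo 0 1) (hr : 0 < r) (x : ℝ) :
    |binomCDF (r + 1) p x - binomCDF (r + 1) p (x - 1) - matchedNormalPDF (r + 2) p x| ≤
      ((r + 1) * π ^ 4 / (20 * r ^ 2) + 3 / (r + 1)) / (2 * π * (p * (1 - p))) := by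
  have hu : 0 < p * (1 - p) := mul_pos hp.1 (sub_pos.2 hp.2)
  have hv : 0 < (r + 2) * (p * (1 - p)) := by positivity
  set a : ℝ := (r + 1 : ℕ) * p - (⌈x⌉ - 1 : ℤ) with ha
  set b : ℝ := (r + 2 : ℕ) * p - x with hb
  have hab : |b - a| ≤ 1 := by
    rw [ha, hb, abs_le]
    push_cast
    constructor <;> linarith [Int.le_ceil x, Int.ceil_lt_add_one x, hp.1, hp.2]
  have hbinom := intervalIntegral_bernoulliChar_pow_mul_exp (r + 1) p x
  rw [intervalIntegral.integral_of_le (by linarith [Real.pi_pos]),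
    ← integral_indicator measurableSet_Ioc] at hbinom
  have hnormal : ∫ t : ℝ, (Real.exp (-((r + 2) * (p * (1 - p)) * t ^ 2 / 2)) : ℂ) *
      Complex.exp (Complex.I * (b * t : ℝ)) = (2 * π * matchedNormalPDF (r + 2) p x : ℝ) := by
    have h := integral_exp_neg_mul_sq_mul_exp_I_mul ((r + 2 : ℕ) * p) x (Real.toNNReal_pos.2 hv).ne'
    rw [Real.coe_toNNReal _ hv.le] at h
    rw [h, matchedNormalPDF]
    push_cast
    ring_nf
  have hint : IntegrableOn (fun t : ℝ ↦ bernoulliChar p t ^ (r + 1) *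
      Complex.exp (Complex.I * (a * t : ℝ))) (Ioc (-π) π) :=
    (((continuous_bernoulliChar p).pow _).mul (by fun_prop)).integrableOn_Ioc
  have hsub := integral_sub (hint.integrable_indicator measurableSet_Ioc)
    (integrable_exp_neg_mul_sq_mul_exp_I_mul hv b)
  rw [hbinom, hnormal, ← Complex.ofReal_sub, ← mul_sub] at hsub
  have hle := norm_integral_le_of_norm_le (integrable_fourierMajorant hp hr)
    (.of_forall (norm_fourier_integrand_sub_le (Ioo_subset_Icc_self hp) hab r))
  rw [hsub, integral_fourierMajorant hp hr, Complex.norm_real, norm_mul,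
    Real.norm_of_nonneg (by positivity), Real.norm_eq_abs] at hle
  rwa [mul_comm (2 * π), ← div_div, le_div_iff₀' (by positivity)]

end LocalLimit

theorem abs_mul_binomCDF_sub_sub_matchedNormalPDF_le {p : ℝ} (hp : p ∈ Ioo 0 1) {m : ℕ}
    (hm : 200 ≤ m) (x : ℝ) :
    |(m + 1) * (binomCDF m p x - binomCDF m p (x - 1) - matchedNormalPDF (m + 1) p x)| ≤
      1.28 / (p * (1 - p)) := by
  obtain ⟨r, rfl⟩ : ∃ r, m = r + 1 := ⟨m - 1, by omega⟩
  have hr : (199 : ℝ) ≤ r := by exact_mod_cast Nat.le_of_succ_le_succ hm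
  have hu : 0 < p * (1 - p) := mul_pos hp.1 (sub_pos.2 hp.2)
  have hpi3 : π ^ 3 ≤ 31.01 := by
    calc π ^ 3 ≤ 3.1416 ^ 3 := by
          gcongr
          exact Real.pi_lt_d4.le
      _ ≤ 31.01 := by norm_num
  have hcubic : (r + 2) * (r + 1) / (r : ℝ) ^ 2 ≤ 1.016 := by
    rw [div_le_iff₀ (by positivity)]
    nlinarith only [hr]
  have hlinear : ((r : ℝ) + 2) / (r + 1) ≤ 1.006 := by
    rw [div_le_iff₀ (by positivity)]
    linarith
  calc _ = (r + 2) * |binomCDF (r + 1) p x - binomCDF (r + 1) p (x - 1) -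
        matchedNormalPDF (r + 2) p x| := by
        rw [abs_mul, abs_of_nonneg (by positivity), Nat.cast_add_one, add_assoc, one_add_one_eq_two]
    _ ≤ (r + 2) * (((r + 1) * π ^ 4 / (20 * r ^ 2) + 3 / (r + 1)) / (2 * π * (p * (1 - p)))) := by
        gcongr
        exact abs_binomCDF_sub_sub_matchedNormalPDF_le hp (by omega) x
    _ = ((r + 2) * (r + 1) / r ^ 2 * (π ^ 3 / 40) + (r + 2) / (r + 1) * (3 / (2 * π))) /
        (p * (1 - p)) := by
        field_simp
        ring
    _ ≤ (1.016 * (31.01 / 40) + 1.006 * (3 / (2 * 3.14))) / (p * (1 - p)) := by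
        gcongr
        exact Real.pi_gt_d2.le
    _ ≤ 1.28 / (p * (1 - p)) := by
        gcongr
        norm_num

/-! ### The normal distribution -/

theorem gaussianPDFReal_le_inv_sqrt (μ : ℝ) (v : ℝ≥0) (x : ℝ) :
    gaussianPDFReal μ v x ≤ (√(2 * π * v))⁻¹ := by
  rw [gaussianPDFReal]
  refine mul_le_of_le_one_right (by positivity) (Real.exp_le_one_iff.2 ?_)
  exact div_nonpos_of_nonpos_of_nonneg (neg_nonpos.2 (sq_nonneg _)) (by positivity)

theorem gaussianPDFReal_eq_gaussianPDFReal_zero_one_div_sqrt (μ : ℝ) (v : ℝ≥0) (x : ℝ) :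
    gaussianPDFReal μ v x = gaussianPDFReal 0 1 ((x - μ) / √v) / √v := by
  simp only [gaussianPDFReal, sub_zero, NNReal.coe_one, mul_one, div_pow,
    Real.sq_sqrt v.coe_nonneg, Real.sqrt_mul' _ v.coe_nonneg]
  ring_nf

theorem abs_sub_mul_gaussianPDFReal_le (μ : ℝ) (v : ℝ≥0) (x : ℝ) :
    |x - μ| * gaussianPDFReal μ v x ≤ (√(2 * π))⁻¹ := by
  have hexp (z : ℝ) : |z| * Real.exp (-z ^ 2 / 2) ≤ 1 := by
    rw [neg_div, Real.exp_neg, ← div_eq_mul_inv, div_le_one (Real.exp_pos _)]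
    nlinarith [Real.add_one_le_exp (z ^ 2 / 2), sq_nonneg (|z| - 1), sq_abs z]
  calc |x - μ| * gaussianPDFReal μ v x
      = |(x - μ) / √v| * gaussianPDFReal 0 1 ((x - μ) / √v) := by
        rw [gaussianPDFReal_eq_gaussianPDFReal_zero_one_div_sqrt, abs_div,
          abs_of_nonneg (Real.sqrt_nonneg _)]
        ring
    _ = (√(2 * π))⁻¹ * (|(x - μ) / √v| * Real.exp (-((x - μ) / √v) ^ 2 / 2)) := by
        simp only [gaussianPDFReal, sub_zero, NNReal.coe_one, mul_one]
        ring
    _ ≤ (√(2 * π))⁻¹ := mul_le_of_le_one_right (by positivity) (hexp _)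

theorem Phi_eq_integral_gaussianPDFReal (z : ℝ) :
    Phi z = ∫ t in Iio z, gaussianPDFReal 0 1 t := by
  simp only [Phi, gaussianPDFReal, sub_zero, NNReal.coe_one, mul_one, integral_const_mul]

theorem Phi_nonneg (z : ℝ) : 0 ≤ Phi z := by
  rw [Phi_eq_integral_gaussianPDFReal]
  exact integral_nonneg (gaussianPDFReal_nonneg 0 1)

theorem Phi_le_one (z : ℝ) : Phi z ≤ 1 := by
  rw [Phi_eq_integral_gaussianPDFReal, ← integral_gaussianPDFReal_eq_one 0 one_ne_zero]
  exact setIntegral_le_integral (integrable_gaussianPDFReal 0 1)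
    (.of_forall (gaussianPDFReal_nonneg 0 1))

theorem hasDerivAt_Phi (z : ℝ) : HasDerivAt Phi (gaussianPDFReal 0 1 z) z := by
  have hint := integrable_gaussianPDFReal 0 1
  have hcont : Continuous (gaussianPDFReal 0 1) := by
    rw [gaussianPDFReal_def]
    fun_prop
  have hPhi : Phi = fun x ↦ (∫ t in Iic 0, gaussianPDFReal 0 1 t) +
      ∫ t in (0 : ℝ)..x, gaussianPDFReal 0 1 t := by
    ext x
    rw [Phi_eq_integral_gaussianPDFReal, ← integral_Iic_eq_integral_Iio,
      ← intervalIntegral.integral_Iic_sub_Iic hint.integrableOn hint.integrableOn]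
    ring
  rw [hPhi]
  exact (hcont.integral_hasStrictDerivAt 0 z).hasDerivAt.const_add _

theorem hasDerivAt_Phi_sub_div_sqrt {m v : ℝ → ℝ} {m' v' p : ℝ} (hm : HasDerivAt m m' p)
    (hv : HasDerivAt v v' p) (hpos : 0 < v p) (x : ℝ) :
    HasDerivAt (fun p ↦ Phi ((x - m p) / √(v p)))
      (-((m' + (x - m p) * v' / (2 * v p)) * gaussianPDFReal (m p) (v p).toNNReal x)) p := by
  refine ((hasDerivAt_Phi _).comp p
    ((hm.const_sub x).div (hv.sqrt hpos.ne') (Real.sqrt_ne_zero'.2 hpos))).congr_deriv ?_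
  have hsq := Real.sq_sqrt hpos.le
  have : 0 < √(v p) := Real.sqrt_pos.2 hpos
  rw [gaussianPDFReal_eq_gaussianPDFReal_zero_one_div_sqrt (m p), Real.coe_toNNReal _ hpos.le,
    Pi.div_apply]
  field_simp
  rw [hsq]
  ring

/-! ### The error of the normal approximation -/

/-- The error at `x` of the normal approximation to the binomial distribution function, whose
supremum over `x` is `Delta n p`. -/
noncomputable def normalError (n : ℕ) (x p : ℝ) : ℝ :=
  binomCDF n p x - Phi ((x - n * p) / √(n * p * (1 - p)))

theorem abs_normalError_le_one {p : ℝ} (hp : p ∈ Icc 0 1) (n : ℕ) (x : ℝ) :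
    |normalError n x p| ≤ 1 :=
  abs_sub_le_of_nonneg_of_le (binomCDF_nonneg hp x) (binomCDF_le_one hp x)
    (Phi_nonneg _) (Phi_le_one _)

theorem hasDerivAt_normalError {p : ℝ} (hp : p ∈ Ioo 0 1) (m : ℕ) (x : ℝ) :
    HasDerivAt (normalError (m + 1) x)
      (-((m + 1) * (binomCDF m p x - binomCDF m p (x - 1) - matchedNormalPDF (m + 1) p x)) +
        (1 - 2 * p) / (2 * (p * (1 - p))) *
          ((x - (m + 1 : ℕ) * p) * matchedNormalPDF (m + 1) p x)) p := by
  have hq : 0 < 1 - p := sub_pos.2 hp.2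
  have hp0 : 0 < p := hp.1
  have hmean : HasDerivAt (fun p ↦ ((m + 1 : ℕ) : ℝ) * p) (m + 1) p := by
    simpa using (hasDerivAt_id p).const_mul ((m + 1 : ℕ) : ℝ)
  have hvar : HasDerivAt (fun p ↦ ((m + 1 : ℕ) : ℝ) * p * (1 - p)) ((m + 1) * (1 - 2 * p)) p :=
    (hmean.mul ((hasDerivAt_id p).const_sub 1)).congr_deriv (by simp; ring)
  refine ((hasDerivAt_binomCDF m p x).sub
    (hasDerivAt_Phi_sub_div_sqrt hmean hvar (by positivity) x)).congr_deriv ?_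
  rw [matchedNormalPDF]
  push_cast
  field_simp
  ring

theorem inv_sqrt_two_pi_le : (√(2 * π))⁻¹ ≤ 0.4 := by
  have : 2.5 ≤ √(2 * π) := Real.le_sqrt_of_sq_le (by linarith [Real.pi_gt_d2])
  calc (√(2 * π))⁻¹ ≤ 2.5⁻¹ := by gcongr
    _ = 0.4 := by norm_num

theorem sqrt_natCast_le {n : ℕ} (hn : n ≤ 500000) : √n ≤ 707.2 := by
  have : (n : ℝ) ≤ 500000 := by exact_mod_cast hn
  exact Real.sqrt_le_iff.2 ⟨by norm_num, by linarith⟩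

section AwayFromEndpoints

variable {p p' : ℝ}

theorem mem_Ioo_of_mul_one_sub_pos (hu : 0 < p * (1 - p)) : p ∈ Ioo 0 1 :=
  ⟨by nlinarith, by nlinarith⟩

theorem abs_one_sub_two_mul_le (hu : 0.14 ≤ p * (1 - p)) : |1 - 2 * p| ≤ 0.6634 :=
  abs_le_of_sq_le_sq (by nlinarith) (by norm_num)

theorem matchedNormalPDF_le (hu : 0.14 ≤ p * (1 - p)) {n : ℕ} (hn : 1 ≤ n) (x : ℝ) :
    matchedNormalPDF n p x ≤ 1.1 := by
  have hn' : (1 : ℝ) ≤ n := by exact_mod_cast hn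
  refine (gaussianPDFReal_le_inv_sqrt _ _ x).trans (inv_le_of_inv_le₀ (by norm_num) ?_)
  rw [Real.coe_toNNReal _ (by nlinarith)]
  refine Real.le_sqrt_of_sq_le ?_
  nlinarith [Real.pi_gt_d2, mul_le_mul hn' hu (by norm_num) (by positivity)]

theorem abs_mul_sub_mul_matchedNormalPDF_le (hu : 0.14 ≤ p * (1 - p)) (n : ℕ) (x : ℝ) :
    |(1 - 2 * p) / (2 * (p * (1 - p))) * ((x - n * p) * matchedNormalPDF n p x)| ≤ 0.95 := by
  have hmean : |x - n * p| * matchedNormalPDF n p x ≤ 0.4 :=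
    (abs_sub_mul_gaussianPDFReal_le _ _ x).trans inv_sqrt_two_pi_le
  rw [abs_mul, abs_div, abs_of_pos (by linarith : 0 < 2 * (p * (1 - p))), abs_mul,
    abs_of_nonneg (matchedNormalPDF_nonneg n p x)]
  calc _ ≤ 0.6634 / (2 * 0.14) * (0.4 : ℝ) := by
        gcongr
        · exact mul_nonneg (abs_nonneg _) (matchedNormalPDF_nonneg n p x)
        · exact abs_one_sub_two_mul_le hu
    _ ≤ 0.95 := by norm_num

theorem sqrt_mul_abs_mul_binomCDF_sub_sub_matchedNormalPDF_le
    (hu : 0.14 ≤ p * (1 - p)) {m : ℕ} (hm : m + 1 ≤ 500000) (x : ℝ) :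
    √(m + 1 : ℕ) *
      |(m + 1) * (binomCDF m p x - binomCDF m p (x - 1) - matchedNormalPDF (m + 1) p x)| ≤
      6510 := by
  have hp : p ∈ Ioo 0 1 := mem_Ioo_of_mul_one_sub_pos (by linarith)
  rcases lt_or_ge m 200 with hm' | hm'
  · have hm200 : (m : ℝ) + 1 ≤ 200 := by exact_mod_cast hm'
    have hsqrt : √(m + 1 : ℕ) ≤ 14.7 :=
      Real.sqrt_le_iff.2 ⟨by norm_num, by push_cast; linarith⟩
    have hdensity := matchedNormalPDF_le hu (Nat.le_add_left 1 m) x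
    have hatom := abs_binomCDF_sub_binomCDF_le_one (n := m) (Ioo_subset_Icc_self hp) x (x - 1)
    have hdiff : |binomCDF m p x - binomCDF m p (x - 1) - matchedNormalPDF (m + 1) p x| ≤ 2.1 := by
      refine (abs_sub _ _).trans ?_
      rw [abs_of_nonneg (matchedNormalPDF_nonneg _ p x)]
      linarith
    rw [abs_mul, abs_of_nonneg (by positivity : (0 : ℝ) ≤ m + 1)]
    calc _ ≤ 14.7 * (200 * 2.1 : ℝ) := by gcongr
      _ ≤ 6510 := by norm_num
  · have hsqrt := sqrt_natCast_le hm
    calc _ ≤ 707.2 * (1.28 / 0.14 : ℝ) := by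
          gcongr
          exact (abs_mul_binomCDF_sub_sub_matchedNormalPDF_le hp hm' x).trans (by gcongr)
      _ ≤ 6510 := by norm_num

theorem sqrt_mul_abs_deriv_normalError_le (hu : 0.14 ≤ p * (1 - p)) {n : ℕ} (hn : 1 ≤ n)
    (hn' : n ≤ 500000) (x : ℝ) : √n * |deriv (normalError n x) p| ≤ 7200 := by
  obtain ⟨m, rfl⟩ := Nat.exists_eq_add_of_le' hn
  have hsqrt := sqrt_natCast_le hn'
  have hmain := sqrt_mul_abs_mul_binomCDF_sub_sub_matchedNormalPDF_le hu hn' x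
  have hvar := abs_mul_sub_mul_matchedNormalPDF_le hu (m + 1) x
  rw [(hasDerivAt_normalError (mem_Ioo_of_mul_one_sub_pos (by linarith)) m x).deriv]
  calc _ ≤ √(m + 1 : ℕ) * (_ + _) := by
        gcongr
        exact abs_add_le _ _
    _ ≤ 6510 + 707.2 * 0.95 := by
        rw [mul_add, abs_neg]
        gcongr
    _ ≤ 7200 := by norm_num

theorem le_mul_one_sub_of_mem_Icc (hp : p ∈ Icc 0.1689 0.8311) : 0.14 ≤ p * (1 - p) := by
  nlinarith [mul_nonneg (sub_nonneg.2 hp.1) (sub_nonneg.2 hp.2)]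

theorem sqrt_mul_abs_normalError_sub_le (hp : p ∈ Icc 0.1689 0.8311)
    (hp' : p' ∈ Icc 0.1689 0.8311) {n : ℕ} (hn : 1 ≤ n) (hn' : n ≤ 500000) (x : ℝ) :
    √n * |normalError n x p - normalError n x p'| ≤ 7200 * |p - p'| := by
  have hsqrt : 0 < √n := Real.sqrt_pos.2 (by exact_mod_cast hn)
  have hlip : |normalError n x p - normalError n x p'| ≤ 7200 / √n * |p - p'| := by
    refine (convex_Icc (0.1689 : ℝ) 0.8311).norm_image_sub_le_of_norm_deriv_le
      (f := normalError n x) (fun t ht ↦ ?_) (fun t ht ↦ ?_) hp' hp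
    · obtain ⟨m, rfl⟩ := Nat.exists_eq_add_of_le' hn
      have ht' : t ∈ Ioo 0 1 :=
        mem_Ioo_of_mul_one_sub_pos (by linarith [le_mul_one_sub_of_mem_Icc ht])
      exact (hasDerivAt_normalError ht' m x).differentiableAt
    · exact (le_div_iff₀' hsqrt).2
        (sqrt_mul_abs_deriv_normalError_le (le_mul_one_sub_of_mem_Icc ht) hn hn' x)
  rwa [div_mul_eq_mul_div, le_div_iff₀' hsqrt] at hlip

/-! ### The uniform distance -/

theorem abs_ciSup_sub_ciSup_le {ι : Type*} [Nonempty ι] {f g : ι → ℝ} {C : ℝ}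
    (hf : BddAbove (range f)) (hg : BddAbove (range g)) (h : ∀ i, |f i - g i| ≤ C) :
    |(⨆ i, f i) - ⨆ i, g i| ≤ C := by
  rw [abs_sub_le_iff, sub_le_iff_le_add, sub_le_iff_le_add]
  constructor <;> refine ciSup_le fun i ↦ ?_
  · linarith [(abs_le.1 (h i)).2, le_ciSup hg i]
  · linarith [(abs_le.1 (h i)).1, le_ciSup hf i]

theorem Delta_nonneg (n : ℕ) (p : ℝ) : 0 ≤ Delta n p :=
  Real.iSup_nonneg fun _ ↦ abs_nonneg _

theorem Delta_le_one (hp : p ∈ Icc 0 1) (n : ℕ) : Delta n p ≤ 1 :=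
  ciSup_le (abs_normalError_le_one hp n)

theorem bddAbove_range_abs_normalError (hp : p ∈ Icc 0 1) (n : ℕ) :
    BddAbove (range fun x ↦ |normalError n x p|) :=
  ⟨1, forall_mem_range.2 (abs_normalError_le_one hp n)⟩

theorem sqrt_mul_abs_Delta_sub_le (hp : p ∈ Icc 0.1689 0.8311) (hp' : p' ∈ Icc 0.1689 0.8311)
    {n : ℕ} (hn : 1 ≤ n) (hn' : n ≤ 500000) :
    √n * |Delta n p - Delta n p'| ≤ 7200 * |p - p'| := by
  have hsqrt : 0 < √n := Real.sqrt_pos.2 (by exact_mod_cast hn)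
  have hsub : Icc (0.1689 : ℝ) 0.8311 ⊆ Icc 0 1 := Icc_subset_Icc (by norm_num) (by norm_num)
  rw [← le_div_iff₀' hsqrt]
  refine abs_ciSup_sub_ciSup_le (bddAbove_range_abs_normalError (hsub hp) n)
    (bddAbove_range_abs_normalError (hsub hp') n) fun x ↦ (abs_abs_sub_abs_le _ _).trans ?_
  rw [le_div_iff₀' hsqrt]
  exact sqrt_mul_abs_normalError_sub_le hp hp' hn hn' x

/-! ### The weight `ρ` -/

theorem one_le_rho (hp : p ∈ Ioo 0 1) : 1 ≤ rho p := by
  have hu : 0 < p * (1 - p) := mul_pos hp.1 (sub_pos.2 hp.2)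
  rw [rho, one_le_div (Real.sqrt_pos.2 hu)]
  refine Real.sqrt_le_iff.2 ⟨by positivity, ?_⟩
  nlinarith [sq_nonneg (1 - 2 * p), sq_nonneg ((1 - 2 * p) ^ 2)]

theorem hasDerivAt_inv_rho (hp : p ∈ Ioo 0 1) :
    HasDerivAt (fun p ↦ (rho p)⁻¹)
      ((1 - 2 * p) * (1 + 2 * (p * (1 - p))) /
        (2 * √(p * (1 - p)) * (1 - 2 * (p * (1 - p))) ^ 2)) p := by
  have hu : 0 < p * (1 - p) := mul_pos hp.1 (sub_pos.2 hp.2)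
  have hden : 0 < 1 - 2 * (p * (1 - p)) := by nlinarith [sq_nonneg (1 - 2 * p)]
  have hprod : HasDerivAt (fun p : ℝ ↦ p * (1 - p)) (1 - 2 * p) p :=
    ((hasDerivAt_id p).mul ((hasDerivAt_id p).const_sub 1)).congr_deriv (by simp; ring)
  have hrho : (fun p ↦ (rho p)⁻¹) = fun p ↦ √(p * (1 - p)) / (1 - 2 * (p * (1 - p))) := by
    ext p
    rw [rho, inv_div]
    ring_nf
  rw [hrho]
  refine ((hprod.sqrt hu.ne').div ((hprod.const_mul 2).const_sub 1) hden.ne').congr_deriv ?_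
  have hsq := Real.sq_sqrt hu.le
  have : 0 < √(p * (1 - p)) := Real.sqrt_pos.2 hu
  field_simp
  rw [hsq]
  ring

theorem abs_deriv_inv_rho_le (hu : 0.14 ≤ p * (1 - p)) :
    |deriv (fun p ↦ (rho p)⁻¹) p| ≤ 2.5 := by
  have hsqrt : 0.374 ≤ √(p * (1 - p)) := Real.le_sqrt_of_sq_le (by linarith)
  have hden : 0 < 1 - 2 * (p * (1 - p)) := by nlinarith [sq_nonneg (1 - 2 * p)]
  rw [(hasDerivAt_inv_rho (mem_Ioo_of_mul_one_sub_pos (by linarith))).deriv, abs_div, abs_mul,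
    abs_of_nonneg (by linarith : 0 ≤ 1 + 2 * (p * (1 - p))),
    abs_of_pos (by positivity : 0 < 2 * √(p * (1 - p)) * (1 - 2 * (p * (1 - p))) ^ 2),
    div_le_iff₀ (by positivity)]
  have hpoly : |1 - 2 * p| * (1 + 2 * (p * (1 - p))) ≤ 1.87 * (1 - 2 * (p * (1 - p))) ^ 2 := by
    have hu' : p * (1 - p) = (1 - |1 - 2 * p| ^ 2) / 4 := by
      rw [sq_abs]
      ring
    rw [hu']
    nlinarith [mul_nonneg (abs_nonneg (1 - 2 * p)) (sq_nonneg (|1 - 2 * p| - 0.5)),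
      sq_nonneg (|1 - 2 * p| ^ 2 - 0.25), sq_nonneg (|1 - 2 * p| - 0.5)]
  nlinarith [mul_le_mul_of_nonneg_right hsqrt (sq_nonneg (1 - 2 * (p * (1 - p))))]

theorem abs_inv_rho_sub_le (hp : p ∈ Icc 0.1689 0.8311) (hp' : p' ∈ Icc 0.1689 0.8311) :
    |(rho p)⁻¹ - (rho p')⁻¹| ≤ 2.5 * |p - p'| := by
  refine (convex_Icc (0.1689 : ℝ) 0.8311).norm_image_sub_le_of_norm_deriv_le
    (f := fun p ↦ (rho p)⁻¹) (fun t ht ↦ ?_)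
    (fun t ht ↦ abs_deriv_inv_rho_le (le_mul_one_sub_of_mem_Icc ht)) hp' hp
  have ht' : t ∈ Ioo 0 1 :=
    mem_Ioo_of_mul_one_sub_pos (by linarith [le_mul_one_sub_of_mem_Icc ht])
  exact (hasDerivAt_inv_rho ht').differentiableAt

end AwayFromEndpoints

theorem grid_interpolation_T_general {p p' : ℝ} (hp : p ∈ Icc 0.1689 0.8311)
    (hp' : p' ∈ Icc 0.1689 0.8311) {n : ℕ} (hn : 1 ≤ n) (hn' : n ≤ 500000) :
    |T n p - T n p'| ≤ 9200 * |p - p'| := by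
  have hsub : Icc (0.1689 : ℝ) 0.8311 ⊆ Ioo 0 1 := Icc_subset_Ioo (by norm_num) (by norm_num)
  have hrho := one_le_rho (hsub hp)
  have hDelta := Delta_nonneg n p'
  have hsqrt := sqrt_natCast_le hn'
  calc |T n p - T n p'|
      = |√n * (Delta n p - Delta n p') * (rho p)⁻¹ +
          √n * (Delta n p' * ((rho p)⁻¹ - (rho p')⁻¹))| := by
        rw [T, T]
        ring_nf
    _ ≤ √n * |Delta n p - Delta n p'| * (rho p)⁻¹ +
          √n * (Delta n p' * |(rho p)⁻¹ - (rho p')⁻¹|) := by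
        refine (abs_add_le _ _).trans_eq ?_
        rw [abs_mul, abs_mul, abs_mul, abs_mul, abs_of_nonneg (Real.sqrt_nonneg _),
          abs_of_nonneg hDelta, abs_of_nonneg (by positivity : 0 ≤ (rho p)⁻¹)]
    _ ≤ 7200 * |p - p'| * 1 + 707.2 * (1 * (2.5 * |p - p'|)) := by
        gcongr ?_ * ?_ + ?_ * (?_ * ?_)
        · exact sqrt_mul_abs_Delta_sub_le hp hp' hn hn'
        · exact inv_le_one_of_one_le₀ hrho
        · exact Delta_le_one (Ioo_subset_Icc_self (hsub hp')) n
        · exact abs_inv_rho_sub_le hp hp'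
    _ ≤ 9200 * |p - p'| := by linarith [abs_nonneg (p - p')]

/-- If `p, p′ ∈ [0.1689, 0.5]` with `|p − p′| ≤ 5·10⁻¹³` (`p′` the closest node
of the uniform grid with step `10⁻¹²` on `[0.1689, 0.5]`), then for all
`1 ≤ n ≤ 500000`, `|T_n(p) − T_n(p′)| ≤ 4.6·10⁻⁹`. -/
theorem grid_interpolation_T (p p' : ℝ)
    (hp : p ∈ Set.Icc (0.1689 : ℝ) 0.5) (hp' : p' ∈ Set.Icc (0.1689 : ℝ) 0.5)
    (hclose : |p - p'| ≤ 5e-13)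
    (n : ℕ) (hn1 : 1 ≤ n) (hn2 : n ≤ 500000) :
    |T n p - T n p'| ≤ 4.6e-9 := by
  have hsub : Icc (0.1689 : ℝ) 0.5 ⊆ Icc 0.1689 0.8311 := Icc_subset_Icc_right (by norm_num)
  linarith [grid_interpolation_T_general (hsub hp) (hsub hp') hn1 hn2]
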